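/- Let α, β, d ∈ ℤ_{≥0}. There exists a constant C ≠ 0 such that Q_d^{(α,β)}(x) ∼ C x^{−d−α−β−1} as x → ∞; in particular Q_d^{(α,β)}(x) = O(x^{−d−α−β−1}) as x → ∞. -/

import Mathlib

/-!
For real `x > 1` the integral representation is continuous across the real axis near `x`, so the
average of the boundary values is just `Qcut d α β x` (`QJ_eq_Qcut`, by dominated convergence).
Multiplying by `x ^ (d + α + β + 1)` turns the representation into
`(x / (x - 1)) ^ α * (x / (x + 1)) ^ β / 2 ^ (d + 1)` times
`∫ (1 - t) ^ (d + α) * (1 + t) ^ (d + β) * (x / (x - t)) ^ (d + 1)`.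
All the quotients tend to `1`, uniformly bounded for `x ≥ 2`, so dominated convergence gives the
limit `C = 2 ^ (-(d + 1)) * ∫ (1 - t) ^ (d + α) * (1 + t) ^ (d + β)`, whose integrand is positive
on `(-1, 1)`; hence `C ≠ 0`.
-/

open Complex Filter MeasureTheory
open scoped Real Topology

noncomputable section

/-- The Jacobi function of the second kind `Q_d^{(α,β)}(z)` on the cut plane `ℂ ∖ [-1,1]`,
defined by the classical integral representation. -/
def Qcut (d α β : ℕ) (z : ℂ) : ℂ :=
  (z - 1) ^ (-(α : ℤ)) * (z + 1) ^ (-(β : ℤ)) / 2 ^ (d + 1) *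
    ∫ t in (-1 : ℝ)..1, ((1 : ℂ) - t) ^ (d + α) * ((1 : ℂ) + t) ^ (d + β) / ((z : ℂ) - t) ^ (d + 1)

/-- The Jacobi function of the second kind at a real argument, extended to `(-1,1)` by the
average `½(Q(x+i0) + Q(x-i0))` of the boundary values. -/
def QJ (d α β : ℕ) (x : ℝ) : ℂ :=
  limUnder (𝓝[>] (0 : ℝ)) fun ε =>
    (Qcut d α β (x + ε * Complex.I) + Qcut d α β (x - ε * Complex.I)) / 2

/-- The Jacobi weight integral does not vanish: the integrand is real and positive on `(-1, 1)`. -/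
lemma weight_integral_ne_zero (a b : ℕ) :
    (∫ t in (-1 : ℝ)..1, ((1 : ℂ) - t) ^ a * ((1 : ℂ) + t) ^ b) ≠ 0 := by
  have h : (∫ t in (-1 : ℝ)..1, ((1 : ℂ) - t) ^ a * ((1 : ℂ) + t) ^ b)
      = ((∫ t in (-1 : ℝ)..1, (1 - t) ^ a * (1 + t) ^ b : ℝ) : ℂ) := by
    rw [← intervalIntegral.integral_ofReal]
    push_cast
    rfl
  rw [h]
  refine Complex.ofReal_ne_zero.mpr (ne_of_gt ?_)
  refine intervalIntegral.intervalIntegral_pos_of_pos_on ?_ ?_ (by norm_num)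
  · exact Continuous.intervalIntegrable (by fun_prop) _ _
  · intro t ht
    have h1 : 0 < 1 - t := by linarith [ht.2]
    have h2 : 0 < 1 + t := by linarith [ht.1]
    positivity

lemma norm_weight_le (a b : ℕ) {t : ℝ} (ht : t ∈ Set.uIoc (-1 : ℝ) 1) :
    ‖((1 : ℂ) - t) ^ a * ((1 : ℂ) + t) ^ b‖ ≤ 2 ^ a * 2 ^ b := by
  rw [Set.uIoc_of_le (by norm_num)] at ht
  have h1 : ‖(1 : ℂ) - t‖ ≤ 2 := by
    rw [← Complex.ofReal_one, ← Complex.ofReal_sub, Complex.norm_real, Real.norm_eq_abs, abs_le]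
    constructor <;> linarith [ht.1, ht.2]
  have h2 : ‖(1 : ℂ) + t‖ ≤ 2 := by
    rw [← Complex.ofReal_one, ← Complex.ofReal_add, Complex.norm_real, Real.norm_eq_abs, abs_le]
    constructor <;> linarith [ht.1, ht.2]
  rw [norm_mul, norm_pow, norm_pow]
  gcongr

/-- `Qcut` is continuous along the vertical line through a real point `x > 1`. -/
lemma tendsto_Qcut_vertical (d α β : ℕ) {x : ℝ} (hx : 1 < x) :
    Tendsto (fun s : ℝ => Qcut d α β (x + s * Complex.I)) (𝓝 0) (𝓝 (Qcut d α β x)) := by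
  have hz : Tendsto (fun s : ℝ => (x : ℂ) + s * Complex.I) (𝓝 0) (𝓝 (x : ℂ)) := by
    have : Continuous (fun s : ℝ => (x : ℂ) + s * Complex.I) := by fun_prop
    simpa using this.tendsto 0
  have hm : (x : ℂ) - 1 ≠ 0 := by
    exact_mod_cast (sub_pos.mpr hx).ne'
  have hp : (x : ℂ) + 1 ≠ 0 := by
    exact_mod_cast (by linarith : (0 : ℝ) < x + 1).ne'
  unfold Qcut
  refine Tendsto.mul (Tendsto.div_const (Tendsto.mul ?_ ?_) _) ?_
  · exact (hz.sub_const 1).zpow₀ _ (Or.inl hm)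
  · exact (hz.add_const 1).zpow₀ _ (Or.inl hp)
  -- On the whole line, `‖z - t‖ ≥ re z - t ≥ x - 1`.
  have hlow : ∀ (s : ℝ) {t : ℝ}, t ≤ 1 → x - 1 ≤ ‖(x : ℂ) + s * Complex.I - t‖ := by
    intro s t ht
    have h := Complex.re_le_norm ((x : ℂ) + s * Complex.I - t)
    simp at h
    linarith
  have hne : ∀ (s : ℝ) {t : ℝ}, t ≤ 1 → (x : ℂ) + s * Complex.I - t ≠ 0 := by
    intro s t ht
    exact norm_pos_iff.mp (lt_of_lt_of_le (by linarith) (hlow s ht))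
  refine intervalIntegral.tendsto_integral_filter_of_dominated_convergence
    (fun _ => 2 ^ (d + α) * 2 ^ (d + β) / (x - 1) ^ (d + 1)) ?_ ?_ ?_ ?_
  · refine Eventually.of_forall fun s => ?_
    refine Measurable.aestronglyMeasurable ?_
    fun_prop
  · refine Eventually.of_forall fun s => Eventually.of_forall fun t ht => ?_
    have h1 := norm_weight_le (d + α) (d + β) ht
    rw [Set.uIoc_of_le (by norm_num)] at ht
    rw [norm_div, norm_pow]
    have : 0 < x - 1 := by linarith
    have h2 := hlow s ht.2
    gcongr
  · exact intervalIntegrable_const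
  · refine Eventually.of_forall fun t ht => ?_
    rw [Set.uIoc_of_le (by norm_num)] at ht
    refine Tendsto.div tendsto_const_nhds ((hz.sub_const _).pow _) ?_
    have := hne 0 ht.2
    simp only [Complex.ofReal_zero, zero_mul, add_zero] at this
    exact pow_ne_zero _ this

lemma QJ_eq_Qcut (d α β : ℕ) {x : ℝ} (hx : 1 < x) : QJ d α β x = Qcut d α β x := by
  have h := tendsto_Qcut_vertical d α β hx
  have hneg : Tendsto (fun s : ℝ => -s) (𝓝 0) (𝓝 0) := by
    simpa using (continuous_neg (G := ℝ)).tendsto 0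
  have h2 := ((h.add (h.comp hneg)).div_const 2).mono_left
    (nhdsWithin_le_nhds (s := Set.Ioi (0 : ℝ)))
  refine Tendsto.limUnder_eq ?_
  convert h2 using 2
  · simp [Function.comp, sub_eq_add_neg]
  · ring

lemma tendsto_div_sub (t : ℝ) :
    Tendsto (fun x : ℝ => (x : ℂ) / ((x : ℂ) - t)) atTop (𝓝 1) := by
  have h1 : Tendsto (fun x : ℝ => 1 + t / (x - t)) atTop (𝓝 (1 + 0)) :=
    tendsto_const_nhds.add
      (tendsto_const_nhds.div_atTop (tendsto_atTop_add_const_right _ (-t) tendsto_id))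
  have h2 := (Complex.continuous_ofReal.tendsto _).comp h1
  simp only [add_zero, Complex.ofReal_one] at h2
  refine h2.congr' ?_
  filter_upwards [eventually_gt_atTop t] with x hx
  have : (x : ℂ) - t ≠ 0 := by exact_mod_cast (sub_pos.mpr hx).ne'
  simp only [Function.comp]
  push_cast
  field_simp
  ring

lemma tendsto_scaled_integral (d a b : ℕ) :
    Tendsto (fun x : ℝ => ∫ t in (-1 : ℝ)..1,
        ((1 : ℂ) - t) ^ a * ((1 : ℂ) + t) ^ b * ((x : ℂ) / (x - t)) ^ (d + 1)) atTop
      (𝓝 (∫ t in (-1 : ℝ)..1, ((1 : ℂ) - t) ^ a * ((1 : ℂ) + t) ^ b)) := by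
  refine intervalIntegral.tendsto_integral_filter_of_dominated_convergence
    (fun _ => 2 ^ a * 2 ^ b * 2 ^ (d + 1)) ?_ ?_ ?_ ?_
  · refine Eventually.of_forall fun x => Measurable.aestronglyMeasurable ?_
    fun_prop
  · filter_upwards [eventually_ge_atTop (2 : ℝ)] with x hx
    refine Eventually.of_forall fun t ht => ?_
    have h1 := norm_weight_le a b ht
    rw [Set.uIoc_of_le (by norm_num)] at ht
    -- For `x ≥ 2` and `t ≤ 1` one has `x ≤ 2 * (x - t)`.
    have h2 : ‖(x : ℂ) / (x - t)‖ ≤ 2 := by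
      rw [← Complex.ofReal_sub, ← Complex.ofReal_div, Complex.norm_real, Real.norm_eq_abs,
        abs_of_nonneg (div_nonneg (by linarith) (by linarith [ht.2])),
        div_le_iff₀ (by linarith [ht.2])]
      linarith [ht.2]
    rw [norm_mul, norm_pow]
    gcongr
  · exact intervalIntegrable_const
  · refine Eventually.of_forall fun t _ => ?_
    simpa using ((tendsto_div_sub t).pow (d + 1)).const_mul
      (((1 : ℂ) - t) ^ a * ((1 : ℂ) + t) ^ b)

lemma Qcut_mul_pow (d α β : ℕ) {x : ℝ} (hx : 1 < x) :
    Qcut d α β x * (x : ℂ) ^ (d + α + β + 1) =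
      ((x : ℂ) / (x - 1)) ^ α * ((x : ℂ) / (x + 1)) ^ β / 2 ^ (d + 1) *
        ∫ t in (-1 : ℝ)..1, ((1 : ℂ) - t) ^ (d + α) * ((1 : ℂ) + t) ^ (d + β) *
          ((x : ℂ) / (x - t)) ^ (d + 1) := by
  have hm : (x : ℂ) - 1 ≠ 0 := by exact_mod_cast (sub_pos.mpr hx).ne'
  have hp : (x : ℂ) + 1 ≠ 0 := by exact_mod_cast (by linarith : (0 : ℝ) < x + 1).ne'
  have hI : (∫ t in (-1 : ℝ)..1, ((1 : ℂ) - t) ^ (d + α) * ((1 : ℂ) + t) ^ (d + β) *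
          ((x : ℂ) / (x - t)) ^ (d + 1)) =
      (∫ t in (-1 : ℝ)..1, ((1 : ℂ) - t) ^ (d + α) * ((1 : ℂ) + t) ^ (d + β) /
          ((x : ℂ) - t) ^ (d + 1)) * (x : ℂ) ^ (d + 1) := by
    rw [← intervalIntegral.integral_mul_const]
    congr 1
    ext t
    rw [div_pow]
    ring
  rw [hI, Qcut, zpow_neg, zpow_neg, zpow_natCast, zpow_natCast, div_pow, div_pow]
  field_simp
  ring

/-- **Asymptotics of the Jacobi function** (equation (2.3)): `Q_d^{(α,β)}(x) ∼ C·x^{-d-α-β-1}`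
as `x → ∞` for some nonzero constant `C`; in particular `Q_d^{(α,β)}(x) = O(x^{-d-α-β-1})`. -/
theorem jacobiQ_asymptotics (d α β : ℕ) :
    ∃ C : ℂ, C ≠ 0 ∧
      Asymptotics.IsEquivalent atTop (fun x : ℝ => QJ d α β x)
        (fun x : ℝ => C * (x : ℂ) ^ (-((d : ℤ) + α + β + 1))) ∧
      (fun x : ℝ => QJ d α β x) =O[atTop] fun x : ℝ => x ^ (-((d : ℤ) + α + β + 1)) := by
  set J : ℂ := ∫ t in (-1 : ℝ)..1, ((1 : ℂ) - t) ^ (d + α) * ((1 : ℂ) + t) ^ (d + β) with hJ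
  set C : ℂ := J / 2 ^ (d + 1) with hCdef
  have hC : C ≠ 0 := div_ne_zero (weight_integral_ne_zero _ _) (pow_ne_zero _ two_ne_zero)
  have hlim : Tendsto (fun x : ℝ => QJ d α β x * (x : ℂ) ^ (d + α + β + 1)) atTop (𝓝 C) := by
    have h1 := (tendsto_div_sub 1).pow α
    have h2 := (tendsto_div_sub (-1)).pow β
    have h3 := ((h1.mul h2).div_const (2 ^ (d + 1))).mul
      (tendsto_scaled_integral d (d + α) (d + β))
    have hval : (1 : ℂ) ^ α * 1 ^ β / 2 ^ (d + 1) * J = C := by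
      rw [hCdef, one_pow, one_pow]
      ring
    rw [hval] at h3
    refine h3.congr' ?_
    filter_upwards [eventually_gt_atTop (1 : ℝ)] with x hx
    rw [QJ_eq_Qcut d α β hx, Qcut_mul_pow d α β hx]
    simp
  have hpow : ∀ x : ℝ, (x : ℂ) ^ (-((d : ℤ) + α + β + 1)) = ((x : ℂ) ^ (d + α + β + 1))⁻¹ := by
    intro x
    rw [zpow_neg, ← zpow_natCast]
    push_cast
    rfl
  have hEq : Asymptotics.IsEquivalent atTop (fun x : ℝ => QJ d α β x)
      (fun x : ℝ => C * (x : ℂ) ^ (-((d : ℤ) + α + β + 1))) := by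
    have hv : ∀ᶠ x : ℝ in atTop, C * (x : ℂ) ^ (-((d : ℤ) + α + β + 1)) ≠ 0 := by
      filter_upwards [eventually_gt_atTop (0 : ℝ)] with x hx
      exact mul_ne_zero hC (zpow_ne_zero _ (by exact_mod_cast hx.ne'))
    rw [Asymptotics.isEquivalent_iff_tendsto_one hv]
    have h := hlim.div_const C
    rw [div_self hC] at h
    refine h.congr fun x => ?_
    simp only [Pi.div_apply, hpow]
    rw [div_mul_eq_div_div, div_inv_eq_mul, div_mul_eq_mul_div]
  refine ⟨C, hC, hEq, hEq.isBigO.trans ?_⟩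
  refine Asymptotics.IsBigO.of_bound ‖C‖ (Eventually.of_forall fun x => ?_)
  rw [norm_mul, norm_zpow, norm_zpow, Complex.norm_real]

end
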